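/- Let θ ≥ 0, ε ≥ 0, μ_min > 0, and μ₁, μ₂ : ℝ → [μ_min, ∞) continuous, and define Σ(y) := diag(−σ₁ √(y₁² + ε)/μ₁(y₁), −σ₂ √(y₂² + ε)/μ₂(y₂)) for y = (y₁, y₂) ∈ ℝ². Suppose Assumption 1 holds with constant ω > 0 and Assumption 2 holds for Σ. Then for every y ∈ ℝ² there exists a unique pair (M, N) with M ∈ C¹([0,1]; M₂(ℝ)) and N ∈ M₂(ℝ) such that: (a) Λ M′(ξ) = θ Σ(y)(M(ξ) + ∫₀¹ K₂(s)M(s) ds) + ∫₀¹ K₃(s)M(s) ds + K₄ M(1) + H N for all ξ ∈ (0,1); (b) M(0) = 0; and (c) the normalization ∫₀¹ K₁(ξ) M(ξ) dξ = I₂ holds. -/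

import Mathlib

open MeasureTheory Matrix Set

noncomputable section

attribute [local instance] Matrix.normedAddCommGroup Matrix.normedSpace

abbrev Vec2 := Fin 2 → ℝ
abbrev Mat2 := Matrix (Fin 2) (Fin 2) ℝ

/-- Nondimensional pressure distribution `p̄(ξ) = (a/(1-e^{-a})) e^{-aξ}`. -/
def pbar (a ξ : ℝ) : ℝ := a / (1 - Real.exp (-a)) * Real.exp (-a * ξ)

/-- The physical parameters of the single-track tire model. -/
structure TireParams where
  vx : ℝ
  L1 : ℝ
  L2 : ℝ
  Fz1 : ℝ
  Fz2 : ℝ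
  σ1 : ℝ
  σ2 : ℝ
  a1 : ℝ
  a2 : ℝ
  φ1 : ℝ
  φ2 : ℝ
  vx_pos : 0 < vx
  L1_pos : 0 < L1
  L2_pos : 0 < L2
  Fz1_pos : 0 < Fz1
  Fz2_pos : 0 < Fz2
  σ1_pos : 0 < σ1
  σ2_pos : 0 < σ2
  a1_pos : 0 < a1
  a2_pos : 0 < a2
  φ1_mem : φ1 ∈ Set.Ioc (0:ℝ) 1
  φ2_mem : φ2 ∈ Set.Ioc (0:ℝ) 1

namespace TireParams

variable (P : TireParams)

def ψ1 : ℝ := 1 - P.φ1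
def ψ2 : ℝ := 1 - P.φ2

def Λmat : Mat2 := Matrix.diagonal ![P.vx / P.L1, P.vx / P.L2]

def Hmat : Mat2 := (2:ℝ) • Matrix.diagonal ![P.φ1, P.φ2]

def K1 (ξ : ℝ) : Mat2 :=
  Matrix.diagonal ![P.Fz1 * P.σ1 * pbar P.a1 ξ, P.Fz2 * P.σ2 * pbar P.a2 ξ]

def K2 (ξ : ℝ) : Mat2 :=
  -Matrix.diagonal ![P.ψ1 * pbar P.a1 ξ, P.ψ2 * pbar P.a2 ξ]

def K3 (ξ : ℝ) : Mat2 :=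
  -P.vx • Matrix.diagonal ![P.ψ1 / P.L1 * deriv (pbar P.a1) ξ, P.ψ2 / P.L2 * deriv (pbar P.a2) ξ]

def K4 : Mat2 :=
  P.vx • Matrix.diagonal ![P.ψ1 / P.L1 * pbar P.a1 1, P.ψ2 / P.L2 * pbar P.a2 1]

def Q (ξ : ℝ) : Mat2 := P.K1 ξ * (P.Hmat)⁻¹

/-- `(𝒦ζ) = ∫₀¹ K(ξ) ζ(ξ) dξ`. -/
def Kop (K : ℝ → Mat2) (ζ : ℝ → Vec2) : Vec2 := ∫ ξ in (0:ℝ)..1, (K ξ).mulVec (ζ ξ)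

def K1op (ζ : ℝ → Vec2) : Vec2 := Kop P.K1 ζ

def K2op (ζ : ℝ → Vec2) : Vec2 := Kop P.K2 ζ

/-- `(𝒦₃ζ) = ∫₀¹ K₃(ξ)ζ(ξ)dξ + K₄ ζ(1)`. -/
def K3op (ζ : ℝ → Vec2) : Vec2 := Kop P.K3 ζ + (P.K4).mulVec (ζ 1)

/-- `(𝒜ζ)(ξ) = -Λ ζ'(ξ) + (𝒦₃ζ)`, expressed through a given derivative `ζ'`. -/
def Aop (ζ ζ' : ℝ → Vec2) (ξ : ℝ) : Vec2 := -(P.Λmat).mulVec (ζ' ξ) + P.K3op ζ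

end TireParams

/-- `ζ` is C¹ on `[0,1]` with derivative `ζ'`. -/
def IsC1On01 (ζ ζ' : ℝ → Vec2) : Prop :=
  (∀ ξ ∈ Icc (0:ℝ) 1, HasDerivWithinAt ζ (ζ' ξ) (Icc (0:ℝ) 1) ξ) ∧
    ContinuousOn ζ' (Icc (0:ℝ) 1)

/-- Square integrability on `(0,1)`. -/
def SqIntegrableOn01 (ζ : ℝ → Vec2) : Prop :=
  Measurable ζ ∧ IntervalIntegrable (fun ξ => ∑ i, (ζ ξ i) ^ 2) volume 0 1

/-- Assumption 1 (strict dissipativity of `𝒜`). -/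
def Assumption1 (P : TireParams) (ω : ℝ) : Prop :=
  ∀ ζ ζ' : ℝ → Vec2, IsC1On01 ζ ζ' → ζ 0 = 0 →
    (∫ ξ in (0:ℝ)..1, P.Aop ζ ζ' ξ ⬝ᵥ (P.Q ξ).mulVec (ζ ξ)) ≤
      -ω * ∫ ξ in (0:ℝ)..1, ∑ i, (ζ ξ i) ^ 2

/-- Assumption 2 (dissipativity of the source `Σ`). -/
def Assumption2 (P : TireParams) (S : Vec2 → Mat2) : Prop :=
  ∀ y : Vec2, ∀ ζ : ℝ → Vec2, SqIntegrableOn01 ζ →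
    (∫ ξ in (0:ℝ)..1, ζ ξ ⬝ᵥ (P.Q ξ).mulVec ((S y).mulVec (ζ ξ + P.K2op ζ))) ≤ 0

/-- Matrix-valued `M` is C¹ on `[0,1]` with derivative `M'`. -/
def IsC1MatOn01 (M M' : ℝ → Mat2) : Prop :=
  (∀ ξ ∈ Icc (0:ℝ) 1, HasDerivWithinAt M (M' ξ) (Icc (0:ℝ) 1) ξ) ∧
    ContinuousOn M' (Icc (0:ℝ) 1)

/-- The tire friction source matrix
`Σ(y) = diag(−σ₁√(y₁²+ε)/μ₁(y₁), −σ₂√(y₂²+ε)/μ₂(y₂))`. -/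
def Stire (σ1 σ2 ε : ℝ) (μ1 μ2 : ℝ → ℝ) (y : Vec2) : Mat2 :=
  Matrix.diagonal ![-(σ1 * Real.sqrt ((y 0) ^ 2 + ε) / μ1 (y 0)),
                    -(σ2 * Real.sqrt ((y 1) ^ 2 + ε) / μ2 (y 1))]

/-- Right-hand side of the nonlocal matrix ODE
`ΛM'(ξ) = θΣ(y)(M(ξ) + ∫₀¹K₂M) + ∫₀¹K₃M + K₄M(1) + HN`. -/
def matODE_RHS (P : TireParams) (θ : ℝ) (Sy : Mat2) (M : ℝ → Mat2) (N : Mat2) (ξ : ℝ) : Mat2 :=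
  θ • (Sy * (M ξ + ∫ s in (0:ℝ)..1, P.K2 s * M s)) +
    (∫ s in (0:ℝ)..1, P.K3 s * M s) + P.K4 * M 1 + P.Hmat * N

/-!
Row `i`, column `j` of the matrix equation is a scalar equation for `m = M i j`. With
`λ = v_x / L_i`, `κ = (θ Σ(y))_i`, `ψ = 1 - φ_i` and `n = N i j`, an integration by parts of the
boundary term turns it into `g = ψ ∫₀¹ p̄ g + (1 - ψ) 2n` on `(0,1)`, where `g = λ m' - κ m`.
The right-hand side is constant and `p̄` has mass one, so `g` equals its own weighted mean; as
`ψ ≠ 1`, the nonlocal equation collapses to the local one `λ m' - κ m = 2n`. Together with `m 0 = 0`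
this gives `M = D N` for an explicit nonnegative diagonal `D`, and the normalization reads
`(∫₀¹ K₁ D) N = I₂` with an invertible diagonal matrix on the left.
-/

section WeightedMean

variable {a b c ψ : ℝ} {p g : ℝ → ℝ}

theorem integral_weight_mul_eq_of_eqOn_const (hab : a ≤ b) (hp : ∫ x in a..b, p x = 1)
    (hg : ∀ x ∈ Ioo a b, g x = c) : ∫ x in a..b, p x * g x = c :=
  calc ∫ x in a..b, p x * g x = ∫ x in a..b, p x * c :=
        intervalIntegral.integral_congr_Ioo_of_le hab fun x hx => by simp only [hg x hx]
    _ = c := by rw [intervalIntegral.integral_mul_const, hp, one_mul]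

theorem eq_weightedMean_combination_iff_eq_const (hab : a ≤ b) (hp : ∫ x in a..b, p x = 1)
    (hψ : ψ ≠ 1) :
    (∀ x ∈ Ioo a b, g x = ψ * (∫ t in a..b, p t * g t) + (1 - ψ) * c) ↔
      ∀ x ∈ Ioo a b, g x = c := by
  constructor <;> intro hg x hx
  · have hmean := integral_weight_mul_eq_of_eqOn_const hab hp hg
    rw [hg x hx, ← hmean]
    refine mul_left_cancel₀ (sub_ne_zero.2 hψ.symm) ?_
    linear_combination hmean
  · rw [hg x hx, integral_weight_mul_eq_of_eqOn_const hab hp hg]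
    ring

end WeightedMean

/-- The solution of `m' = ρ m + 1`, `m 0 = 0`. The integral form of `(exp (ρ x) - 1) / ρ` is also
correct at `ρ = 0`. -/
def stepResponse (ρ x : ℝ) : ℝ := ∫ s in (0 : ℝ)..x, Real.exp (ρ * s)

section StepResponse

variable {ρ x c T : ℝ}

theorem stepResponse_zero (ρ : ℝ) : stepResponse ρ 0 = 0 :=
  intervalIntegral.integral_same

theorem mul_stepResponse (ρ x : ℝ) : ρ * stepResponse ρ x = Real.exp (ρ * x) - 1 := by
  rw [stepResponse, intervalIntegral.mul_integral_comp_mul_left, integral_exp, mul_zero,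
    Real.exp_zero]

theorem hasDerivAt_stepResponse (ρ x : ℝ) :
    HasDerivAt (stepResponse ρ) (Real.exp (ρ * x)) x :=
  (Continuous.integral_hasStrictDerivAt (by fun_prop) 0 x).hasDerivAt

theorem continuous_stepResponse (ρ : ℝ) : Continuous (stepResponse ρ) :=
  continuous_iff_continuousAt.2 fun x => (hasDerivAt_stepResponse ρ x).continuousAt

theorem stepResponse_pos (ρ : ℝ) (hx : 0 < x) : 0 < stepResponse ρ x :=
  intervalIntegral.intervalIntegral_pos_of_pos
    (Continuous.intervalIntegrable (by fun_prop) _ _) (fun _ => Real.exp_pos _) hx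

theorem hasDerivAt_const_mul_stepResponse (ρ c x : ℝ) :
    HasDerivAt (fun x => c * stepResponse ρ x) (ρ * (c * stepResponse ρ x) + c) x :=
  ((hasDerivAt_stepResponse ρ x).const_mul c).congr_deriv <| by
    linear_combination -c * mul_stepResponse ρ x

theorem affine_ode_iff_eq_stepResponse {m m' : ℝ → ℝ} (hT : 0 < T)
    (hm : ∀ x ∈ Icc 0 T, HasDerivWithinAt m (m' x) (Icc 0 T) x)
    (hm' : ContinuousOn m' (Icc 0 T)) (hm0 : m 0 = 0) :
    (∀ x ∈ Ioo 0 T, m' x = ρ * m x + c) ↔ ∀ x ∈ Icc 0 T, m x = c * stepResponse ρ x := by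
  have hmc : ContinuousOn m (Icc 0 T) := fun x hx => (hm x hx).continuousWithinAt
  constructor
  · intro hode
    have hode_closed : EqOn m' (fun x => ρ * m x + c) (Icc 0 T) :=
      EqOn.of_subset_closure hode hm' (by fun_prop) Ioo_subset_Icc_self (closure_Ioo hT.ne).ge
    refine ODE_solution_unique (v := fun _ z => ρ * z + c) (K := ‖ρ‖₊)
      (fun _ => LipschitzWith.of_dist_le_mul fun y z => by simp [Real.dist_eq, ← mul_sub]) hmc
      (fun x hx => ?_)
      (by have := continuous_stepResponse ρ; fun_prop)
      (fun x _ => (hasDerivAt_const_mul_stepResponse ρ c x).hasDerivWithinAt)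
      (by rw [hm0, stepResponse_zero, mul_zero])
    exact ((hm x (Ico_subset_Icc_self hx)).mono_of_mem_nhdsWithin
      (Icc_mem_nhdsGE_of_mem hx)).congr_deriv (hode_closed (Ico_subset_Icc_self hx))
  · intro hsol x hx
    have hmem := Ioo_subset_Icc_self hx
    rw [hsol x hmem]
    have hderiv := (hasDerivAt_const_mul_stepResponse ρ c x).hasDerivWithinAt.congr hsol
      (hsol x hmem)
    exact (uniqueDiffOn_Icc hT x hmem).eq_deriv _ (hm x hmem) hderiv

end StepResponse

/-- The scalar nonlocal right-hand side to which `matODE_RHS` reduces entrywise, for an arbitrary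
weight `p` on `[0, T]`. The source `(1 - ψ) * c` stands for `2 φ n`, so `c = 2 n`. -/
def nonlocalRHS (p : ℝ → ℝ) (T lam κ ψ c : ℝ) (m : ℝ → ℝ) (ξ : ℝ) : ℝ :=
  κ * (m ξ - ψ * ∫ s in (0 : ℝ)..T, p s * m s) +
    lam * ψ * (p T * m T - ∫ s in (0 : ℝ)..T, deriv p s * m s) + (1 - ψ) * c

section NonlocalODE

variable {p m m' : ℝ → ℝ} {T lam κ ψ c : ℝ}

theorem nonlocalRHS_eq_weightedMean (hp : ContDiff ℝ 1 p) (hT : 0 ≤ T)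
    (hm : ∀ x ∈ Icc 0 T, HasDerivWithinAt m (m' x) (Icc 0 T) x)
    (hm' : ContinuousOn m' (Icc 0 T)) (hm0 : m 0 = 0) (ξ : ℝ) :
    nonlocalRHS p T lam κ ψ c m ξ =
      κ * m ξ + (ψ * (∫ s in (0 : ℝ)..T, p s * (lam * m' s - κ * m s)) + (1 - ψ) * c) := by
  rw [← uIcc_of_le hT] at hm hm'
  have hmc : ContinuousOn m (uIcc 0 T) := fun x hx => (hm x hx).continuousWithinAt
  have hpm : IntervalIntegrable (fun s => p s * m s) volume 0 T :=
    (hp.continuous.continuousOn.mul hmc).intervalIntegrable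
  have hpm' : IntervalIntegrable (fun s => p s * m' s) volume 0 T :=
    (hp.continuous.continuousOn.mul hm').intervalIntegrable
  have by_parts : ∫ s in (0 : ℝ)..T, p s * m' s =
      p T * m T - ∫ s in (0 : ℝ)..T, deriv p s * m s := by
    rw [intervalIntegral.integral_mul_deriv_eq_deriv_mul_of_hasDerivWithinAt
      (fun x _ => (hp.differentiable one_ne_zero x).hasDerivAt.hasDerivWithinAt) hm
      (hp.continuous_deriv_one.intervalIntegrable _ _) hm'.intervalIntegrable, hm0, mul_zero,
      sub_zero]
  have mean_split : ∫ s in (0 : ℝ)..T, p s * (lam * m' s - κ * m s) =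
      lam * (∫ s in (0 : ℝ)..T, p s * m' s) - κ * ∫ s in (0 : ℝ)..T, p s * m s := by
    simp only [mul_sub, mul_left_comm (p _)]
    rw [intervalIntegral.integral_sub (hpm'.const_mul lam) (hpm.const_mul κ),
      intervalIntegral.integral_const_mul, intervalIntegral.integral_const_mul]
  rw [nonlocalRHS, mean_split, by_parts]
  ring

theorem nonlocal_ode_iff_eq_stepResponse (hp : ContDiff ℝ 1 p) (hp1 : ∫ s in (0 : ℝ)..T, p s = 1)
    (hT : 0 < T) (hlam : lam ≠ 0) (hψ : ψ ≠ 1)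
    (hm : ∀ x ∈ Icc 0 T, HasDerivWithinAt m (m' x) (Icc 0 T) x)
    (hm' : ContinuousOn m' (Icc 0 T)) (hm0 : m 0 = 0) :
    (∀ ξ ∈ Ioo 0 T, lam * m' ξ = nonlocalRHS p T lam κ ψ c m ξ) ↔
      ∀ ξ ∈ Icc 0 T, m ξ = c / lam * stepResponse (κ / lam) ξ := by
  calc (∀ ξ ∈ Ioo 0 T, lam * m' ξ = nonlocalRHS p T lam κ ψ c m ξ)
    _ ↔ ∀ ξ ∈ Ioo 0 T, lam * m' ξ - κ * m ξ =
          ψ * (∫ s in (0 : ℝ)..T, p s * (lam * m' s - κ * m s)) + (1 - ψ) * c :=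
        forall₂_congr fun ξ _ => by
          rw [nonlocalRHS_eq_weightedMean hp hT.le hm hm' hm0, sub_eq_iff_eq_add']
    _ ↔ ∀ ξ ∈ Ioo 0 T, lam * m' ξ - κ * m ξ = c :=
        eq_weightedMean_combination_iff_eq_const hT.le hp1 hψ
    _ ↔ ∀ ξ ∈ Ioo 0 T, m' ξ = κ / lam * m ξ + c / lam :=
        forall₂_congr fun ξ _ => by
          rw [sub_eq_iff_eq_add', div_mul_eq_mul_div, ← add_div, eq_div_iff hlam, mul_comm lam]
    _ ↔ ∀ ξ ∈ Icc 0 T, m ξ = c / lam * stepResponse (κ / lam) ξ :=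
        affine_ode_iff_eq_stepResponse hT hm hm' hm0

end NonlocalODE

section Pressure

variable {a : ℝ}

theorem contDiff_pbar (a : ℝ) : ContDiff ℝ 1 (pbar a) := by
  unfold pbar
  fun_prop

theorem continuous_pbar (a : ℝ) : Continuous (pbar a) :=
  (contDiff_pbar a).continuous

theorem one_sub_exp_neg_pos (ha : 0 < a) : 0 < 1 - Real.exp (-a) := by
  rw [sub_pos, Real.exp_lt_one_iff]
  exact neg_neg_iff_pos.2 ha

theorem pbar_pos (ha : 0 < a) (ξ : ℝ) : 0 < pbar a ξ :=
  mul_pos (div_pos ha (one_sub_exp_neg_pos ha)) (Real.exp_pos _)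

theorem integral_pbar (ha : 0 < a) : ∫ ξ in (0 : ℝ)..1, pbar a ξ = 1 := by
  have hmass : a * stepResponse (-a) 1 = 1 - Real.exp (-a) := by
    have := mul_stepResponse (-a) 1
    rw [mul_one] at this
    linear_combination -this
  simp only [pbar]
  rw [intervalIntegral.integral_const_mul, div_mul_eq_mul_div, ← stepResponse, hmass,
    div_self (one_sub_exp_neg_pos ha).ne']

end Pressure

section MatrixEntries

variable {m n : Type*} {a b : ℝ}

theorem continuousOn_matrix_iff {M : ℝ → Matrix m n ℝ} {s : Set ℝ} :
    ContinuousOn M s ↔ ∀ i j, ContinuousOn (fun x => M x i j) s :=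
  continuousOn_pi.trans (forall_congr' fun _ => continuousOn_pi)

theorem hasDerivWithinAt_matrix_iff [Finite n] {M : ℝ → Matrix m n ℝ} {D : Matrix m n ℝ}
    {s : Set ℝ} {x : ℝ} :
    HasDerivWithinAt M D s x ↔ ∀ i j, HasDerivWithinAt (fun x => M x i j) (D i j) s x := by
  cases nonempty_fintype n
  exact (hasDerivWithinAt_pi (φ := M) (φ' := D)).trans
    (forall_congr' fun i => hasDerivWithinAt_pi (φ := fun x => M x i) (φ' := D i))

theorem intervalIntegral_pi_apply {ι : Type*} [Fintype ι] {E : ι → Type*}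
    [∀ i, NormedAddCommGroup (E i)] [∀ i, NormedSpace ℝ (E i)] [∀ i, CompleteSpace (E i)]
    {F : ℝ → ∀ i, E i} (hF : ∀ i, IntervalIntegrable (F · i) volume a b)
    (i : ι) : (∫ s in a..b, F s) i = ∫ s in a..b, F s i := by
  simp only [intervalIntegral, Pi.sub_apply, eval_integral fun i => (hF i).1,
    eval_integral fun i => (hF i).2]

variable [Fintype m] [Fintype n]

theorem intervalIntegral_matrix_apply {F : ℝ → Matrix m n ℝ}
    (hF : ∀ i j, IntervalIntegrable (F · i j) volume a b) (i : m) (j : n) :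
    (∫ s in a..b, F s) i j = ∫ s in a..b, F s i j := by
  have hrow (i : m) : IntervalIntegrable (fun s => (F s i : n → ℝ)) volume a b :=
    ⟨Integrable.of_eval fun j => (hF i j).1, Integrable.of_eval fun j => (hF i j).2⟩
  exact (congrFun (intervalIntegral_pi_apply hrow i) j).trans (intervalIntegral_pi_apply (hF i) j)

theorem intervalIntegral_diagonal_mul_apply [DecidableEq m] {d : m → ℝ → ℝ} {M : ℝ → Matrix m n ℝ}
    (hd : ∀ i, Continuous (d i)) (hM : ContinuousOn M (uIcc a b)) (i : m) (j : n) :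
    (∫ s in a..b, diagonal (d · s) * M s) i j = ∫ s in a..b, d i s * M s i j := by
  have hentry (i : m) (j : n) :
      IntervalIntegrable (fun s => (diagonal (d · s) * M s) i j) volume a b := by
    simp only [diagonal_mul]
    exact ((hd i).continuousOn.mul (continuousOn_matrix_iff.1 hM i j)).intervalIntegrable
  simp only [intervalIntegral_matrix_apply hentry, diagonal_mul]

end MatrixEntries

theorem IsC1MatOn01.continuousOn {M M' : ℝ → Mat2} (hM : IsC1MatOn01 M M') :
    ContinuousOn M (Icc 0 1) :=
  fun x hx => (hM.1 x hx).continuousWithinAt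

namespace TireParams

variable (P : TireParams)

/-- The transport speeds `v_x / L_i`, the diagonal of `Λ`. -/
def speed : Fin 2 → ℝ := ![P.vx / P.L1, P.vx / P.L2]

/-- The pressure decay rates `a_i`. -/
def decay : Fin 2 → ℝ := ![P.a1, P.a2]

/-- The coefficients `φ_i`. -/
def φ : Fin 2 → ℝ := ![P.φ1, P.φ2]

/-- The force gains `F_{zi} σ_i`, so that `K₁` has diagonal `gain i * p̄_i`. -/
def gain : Fin 2 → ℝ := ![P.Fz1 * P.σ1, P.Fz2 * P.σ2]

/-- The diagonal of the solution for `N = I₂` and `θ Σ(y) = diag κ`. The factor `2` comes from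
`H = 2 diag(φ₁, φ₂)`. -/
def response (κ : Fin 2 → ℝ) (ξ : ℝ) (i : Fin 2) : ℝ :=
  2 / P.speed i * stepResponse (κ i / P.speed i) ξ

/-- The diagonal of `∫₀¹ K₁ D`, where `D` is the diagonal matrix with entries `response`. -/
def forceResponse (κ : Fin 2 → ℝ) (i : Fin 2) : ℝ :=
  P.gain i * ∫ ξ in (0 : ℝ)..1, pbar (P.decay i) ξ * P.response κ ξ i

variable {P}

theorem speed_pos (i : Fin 2) : 0 < P.speed i := by
  fin_cases i
  exacts [div_pos P.vx_pos P.L1_pos, div_pos P.vx_pos P.L2_pos]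

theorem decay_pos (i : Fin 2) : 0 < P.decay i := by
  fin_cases i
  exacts [P.a1_pos, P.a2_pos]

theorem φ_pos (i : Fin 2) : 0 < P.φ i := by
  fin_cases i
  exacts [P.φ1_mem.1, P.φ2_mem.1]

theorem gain_pos (i : Fin 2) : 0 < P.gain i := by
  fin_cases i
  exacts [mul_pos P.Fz1_pos P.σ1_pos, mul_pos P.Fz2_pos P.σ2_pos]

theorem K1_eq_diagonal (ξ : ℝ) :
    P.K1 ξ = diagonal fun i => P.gain i * pbar (P.decay i) ξ := by
  rw [K1]
  congr! with i
  fin_cases i <;> rfl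

theorem K2_eq_diagonal (ξ : ℝ) :
    P.K2 ξ = diagonal fun i => -((1 - P.φ i) * pbar (P.decay i) ξ) := by
  rw [K2, diagonal_neg]
  congr! with i
  fin_cases i <;> rfl

theorem K3_eq_diagonal (ξ : ℝ) :
    P.K3 ξ = diagonal fun i => -(P.speed i * (1 - P.φ i) * deriv (pbar (P.decay i)) ξ) := by
  rw [K3, ← diagonal_smul]
  congr! with i
  fin_cases i <;> simp [speed, decay, φ, ψ1, ψ2] <;> ring

theorem K4_eq_diagonal :
    P.K4 = diagonal fun i => P.speed i * (1 - P.φ i) * pbar (P.decay i) 1 := by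
  rw [K4, ← diagonal_smul]
  congr! with i
  fin_cases i <;> simp [speed, decay, φ, ψ1, ψ2] <;> ring

theorem Hmat_eq_diagonal : P.Hmat = diagonal fun i => 2 * P.φ i := by
  rw [Hmat, ← diagonal_smul]
  rfl

theorem Λmat_mul_apply (A : Mat2) (i j : Fin 2) : (P.Λmat * A) i j = P.speed i * A i j :=
  diagonal_mul ..

theorem integral_K1_mul_apply {M : ℝ → Mat2} (hM : ContinuousOn M (Icc 0 1)) (i j : Fin 2) :
    (∫ ξ in (0 : ℝ)..1, P.K1 ξ * M ξ) i j =
      P.gain i * ∫ ξ in (0 : ℝ)..1, pbar (P.decay i) ξ * M ξ i j := by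
  have hd (i : Fin 2) : Continuous fun ξ => P.gain i * pbar (P.decay i) ξ :=
    (continuous_pbar _).const_mul _
  rw [← uIcc_of_le zero_le_one] at hM
  simp only [K1_eq_diagonal, intervalIntegral_diagonal_mul_apply hd hM, mul_assoc,
    intervalIntegral.integral_const_mul]

theorem integral_K2_mul_apply {M : ℝ → Mat2} (hM : ContinuousOn M (Icc 0 1)) (i j : Fin 2) :
    (∫ ξ in (0 : ℝ)..1, P.K2 ξ * M ξ) i j =
      -((1 - P.φ i) * ∫ ξ in (0 : ℝ)..1, pbar (P.decay i) ξ * M ξ i j) := by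
  have hd (i : Fin 2) : Continuous fun ξ => -((1 - P.φ i) * pbar (P.decay i) ξ) :=
    ((continuous_pbar _).const_mul _).neg
  rw [← uIcc_of_le zero_le_one] at hM
  simp only [K2_eq_diagonal, intervalIntegral_diagonal_mul_apply hd hM, neg_mul, mul_assoc,
    intervalIntegral.integral_neg, intervalIntegral.integral_const_mul]

theorem integral_K3_mul_apply {M : ℝ → Mat2} (hM : ContinuousOn M (Icc 0 1)) (i j : Fin 2) :
    (∫ ξ in (0 : ℝ)..1, P.K3 ξ * M ξ) i j =
      -(P.speed i * (1 - P.φ i) *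
        ∫ ξ in (0 : ℝ)..1, deriv (pbar (P.decay i)) ξ * M ξ i j) := by
  have hd (i : Fin 2) :
      Continuous fun ξ => -(P.speed i * (1 - P.φ i) * deriv (pbar (P.decay i)) ξ) :=
    ((contDiff_pbar _).continuous_deriv_one.const_mul _).neg
  rw [← uIcc_of_le zero_le_one] at hM
  simp only [K3_eq_diagonal, intervalIntegral_diagonal_mul_apply hd hM]
  simp only [neg_mul, mul_assoc, intervalIntegral.integral_neg,
    intervalIntegral.integral_const_mul]

theorem matODE_RHS_apply (θ : ℝ) (S : Fin 2 → ℝ) {M : ℝ → Mat2} (hM : ContinuousOn M (Icc 0 1))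
    (N : Mat2) (ξ : ℝ) (i j : Fin 2) :
    matODE_RHS P θ (diagonal S) M N ξ i j =
      nonlocalRHS (pbar (P.decay i)) 1 (P.speed i) (θ * S i) (1 - P.φ i) (2 * N i j)
        (fun x => M x i j) ξ := by
  simp only [matODE_RHS, nonlocalRHS, K4_eq_diagonal, Hmat_eq_diagonal, Matrix.add_apply,
    Matrix.smul_apply, diagonal_mul, smul_eq_mul, integral_K2_mul_apply hM,
    integral_K3_mul_apply hM]
  ring

variable {κ : Fin 2 → ℝ}

theorem continuous_response (i : Fin 2) : Continuous fun ξ => P.response κ ξ i :=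
  (continuous_stepResponse _).const_mul _

theorem response_pos (i : Fin 2) {ξ : ℝ} (hξ : 0 < ξ) : 0 < P.response κ ξ i :=
  mul_pos (div_pos two_pos (speed_pos i)) (stepResponse_pos _ hξ)

theorem diagonal_response_zero : (diagonal (P.response κ 0) : Mat2) = 0 := by
  ext i j
  simp [diagonal_apply, response, stepResponse_zero]

theorem forceResponse_pos (i : Fin 2) : 0 < P.forceResponse κ i :=
  mul_pos (gain_pos i) <| intervalIntegral.intervalIntegral_pos_of_pos_on
    (((continuous_pbar _).mul (continuous_response i)).intervalIntegrable _ _)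
    (fun ξ hξ => mul_pos (pbar_pos (decay_pos i) ξ) (response_pos i hξ.1)) one_pos

theorem exists_isC1MatOn01_response_mul (κ : Fin 2 → ℝ) (N : Mat2) :
    ∃ M', IsC1MatOn01 (fun ξ => diagonal (P.response κ ξ) * N) M' := by
  refine ⟨fun ξ => diagonal (fun i => 2 / P.speed i * Real.exp (κ i / P.speed i * ξ)) * N,
    fun ξ _ => hasDerivWithinAt_matrix_iff.2 fun i j => ?_,
    continuousOn_matrix_iff.2 fun i j => ?_⟩
  · simp only [diagonal_mul]
    exact (((hasDerivAt_stepResponse _ ξ).const_mul _).mul_const _).hasDerivWithinAt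
  · simp only [diagonal_mul]
    fun_prop

theorem integral_K1_mul_response_mul {M : ℝ → Mat2} {N : Mat2} (hM : ContinuousOn M (Icc 0 1))
    (hMN : ∀ ξ ∈ Icc (0 : ℝ) 1, M ξ = diagonal (P.response κ ξ) * N) :
    ∫ ξ in (0 : ℝ)..1, P.K1 ξ * M ξ = diagonal (P.forceResponse κ) * N := by
  ext i j
  rw [integral_K1_mul_apply hM, diagonal_mul, forceResponse, mul_assoc,
    ← intervalIntegral.integral_mul_const]
  congr 1
  refine intervalIntegral.integral_congr fun ξ hξ => ?_
  rw [uIcc_of_le zero_le_one] at hξ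
  simp only [hMN ξ hξ, diagonal_mul, mul_assoc]

theorem matODE_iff_eq_response_mul (θ : ℝ) (S : Fin 2 → ℝ) {M M' : ℝ → Mat2} (N : Mat2)
    (hM : IsC1MatOn01 M M') (hM0 : M 0 = 0) :
    (∀ ξ ∈ Ioo (0 : ℝ) 1, P.Λmat * M' ξ = matODE_RHS P θ (diagonal S) M N ξ) ↔
      ∀ ξ ∈ Icc (0 : ℝ) 1, M ξ = diagonal (P.response (fun i => θ * S i) ξ) * N := by
  have entry_iff (i j : Fin 2) := nonlocal_ode_iff_eq_stepResponse (lam := P.speed i)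
    (ψ := 1 - P.φ i) (κ := θ * S i) (c := 2 * N i j) (contDiff_pbar (P.decay i))
    (integral_pbar (decay_pos i)) one_pos (speed_pos i).ne' (sub_eq_self.not.2 (φ_pos i).ne')
    (fun ξ hξ => hasDerivWithinAt_matrix_iff.1 (hM.1 ξ hξ) i j)
    (continuousOn_matrix_iff.1 hM.2 i j) (by rw [hM0]; rfl)
  simp only [← Matrix.ext_iff, Λmat_mul_apply, matODE_RHS_apply θ S hM.continuousOn, diagonal_mul,
    response, div_mul_eq_mul_div, mul_right_comm _ _ (N _ _)] at entry_iff ⊢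
  exact ⟨fun h ξ hξ i j => (entry_iff i j).1 (fun x hx => h x hx i j) ξ hξ,
    fun h ξ hξ i j => (entry_iff i j).2 (fun x hx => h x hx i j) ξ hξ⟩

end TireParams

open TireParams in
theorem statement4_general (P : TireParams) (θ : ℝ) (S : Fin 2 → ℝ) (B : Mat2) :
    ∃ (M M' : ℝ → Mat2) (N : Mat2),
      (IsC1MatOn01 M M' ∧
        (∀ ξ ∈ Ioo (0 : ℝ) 1, P.Λmat * M' ξ = matODE_RHS P θ (diagonal S) M N ξ) ∧
        M 0 = 0 ∧ (∫ ξ in (0 : ℝ)..1, P.K1 ξ * M ξ) = B) ∧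
      (∀ (Mb Mb' : ℝ → Mat2) (Nb : Mat2),
        IsC1MatOn01 Mb Mb' →
        (∀ ξ ∈ Ioo (0 : ℝ) 1, P.Λmat * Mb' ξ = matODE_RHS P θ (diagonal S) Mb Nb ξ) →
        Mb 0 = 0 → (∫ ξ in (0 : ℝ)..1, P.K1 ξ * Mb ξ) = B →
        (∀ ξ ∈ Icc (0 : ℝ) 1, Mb ξ = M ξ) ∧ Nb = N) := by
  set κ : Fin 2 → ℝ := fun i => θ * S i
  have hC : IsUnit (diagonal (P.forceResponse κ)) :=
    isUnit_diagonal.2 <| Pi.isUnit_iff.2 fun i => (forceResponse_pos i).ne'.isUnit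
  obtain ⟨N, hN⟩ : ∃ N, diagonal (P.forceResponse κ) * N = B :=
    hC.dvd.imp fun _ h => h.symm
  obtain ⟨M', hM⟩ := exists_isC1MatOn01_response_mul (P := P) κ N
  have hM0 : diagonal (P.response κ 0) * N = 0 := by rw [diagonal_response_zero, zero_mul]
  refine ⟨_, M', N, ⟨hM, (matODE_iff_eq_response_mul θ S N hM hM0).2 fun _ _ => rfl, hM0,
    (integral_K1_mul_response_mul hM.continuousOn fun _ _ => rfl).trans hN⟩, ?_⟩
  intro Mb Mb' Nb hMb hode hMb0 hB
  have hsol := (matODE_iff_eq_response_mul θ S Nb hMb hMb0).1 hode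
  have hNb : Nb = N := hC.mul_left_cancel <|
    (integral_K1_mul_response_mul hMb.continuousOn hsol).symm.trans (hB.trans hN.symm)
  exact ⟨hNb ▸ hsol, hNb⟩

/-- for every `y ∈ ℝ²` there exists a unique pair `(M,N)`, with `M` C¹ on
`[0,1]`, solving the nonlocal matrix ODE with `M(0) = 0` and normalization `∫₀¹K₁M = I₂`. -/
theorem statement4 (P : TireParams) (θ : ℝ) (hθ : 0 ≤ θ) (ε : ℝ) (hε : 0 ≤ ε)
    (μmin : ℝ) (hμmin : 0 < μmin) (μ1 μ2 : ℝ → ℝ)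
    (hμ1c : Continuous μ1) (hμ2c : Continuous μ2)
    (hμ1 : ∀ x, μmin ≤ μ1 x) (hμ2 : ∀ x, μmin ≤ μ2 x)
    (ω : ℝ) (hω : 0 < ω) (h1 : Assumption1 P ω)
    (h2 : Assumption2 P (Stire P.σ1 P.σ2 ε μ1 μ2)) :
    ∀ y : Vec2,
      ∃ (M M' : ℝ → Mat2) (N : Mat2),
        (IsC1MatOn01 M M' ∧
          (∀ ξ ∈ Ioo (0:ℝ) 1,
            P.Λmat * M' ξ = matODE_RHS P θ (Stire P.σ1 P.σ2 ε μ1 μ2 y) M N ξ) ∧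
          M 0 = 0 ∧ (∫ ξ in (0:ℝ)..1, P.K1 ξ * M ξ) = (1 : Mat2)) ∧
        (∀ (Mb Mb' : ℝ → Mat2) (Nb : Mat2),
          IsC1MatOn01 Mb Mb' →
          (∀ ξ ∈ Ioo (0:ℝ) 1,
            P.Λmat * Mb' ξ = matODE_RHS P θ (Stire P.σ1 P.σ2 ε μ1 μ2 y) Mb Nb ξ) →
          Mb 0 = 0 → (∫ ξ in (0:ℝ)..1, P.K1 ξ * Mb ξ) = (1 : Mat2) →
          (∀ ξ ∈ Icc (0:ℝ) 1, Mb ξ = M ξ) ∧ Nb = N) :=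
  fun _ => statement4_general P θ _ 1
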